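/- arXiv:1103.5955 — 19 statements merged into one kernel-verified Lean document; each statement's English description precedes it below -/
import Mathlib

section
/- Let n ≥ 1 and let H be an abelian (additive) group. If f : S_n → H satisfies f(e) = 0 and f(xy) + f(xy⁻¹) = 2f(x) for all x, y ∈ S_n, then f is a group homomorphism from (S_n, ·) to (H, +), i.e. f(xy) = f(x) + f(y) for all x, y ∈ S_n. -/
/-!
For an involution `t` the equation gives `2 f(xt) = 2 f(x)`; since transpositions generate `S_n`,
`2 f = 0`. The equation then reads `f(xy) = f(xy⁻¹)`, that is, `f` is invariant under right
multiplication by squares. Every 3-cycle is a square and 3-cycles generate `A_n`, so `f` is constant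
on the left cosets of `A_n`: it is `0` on even permutations and takes a single value, killed by `2`,
on odd ones. Such a map is a homomorphism.
-/

theorem jensen_eq1_symm_group_hom (n : ℕ) (hn : 1 ≤ n) (H : Type*) [AddCommGroup H]
    (f : Equiv.Perm (Fin n) → H) (h0 : f 1 = 0)
    (hJ : ∀ x y : Equiv.Perm (Fin n), f (x * y) + f (x * y⁻¹) = 2 • f x) :
    ∀ x y : Equiv.Perm (Fin n), f (x * y) = f x + f y := by
  have two_f : ∀ x, 2 • f x = 0 := by
    intro x
    induction x using Equiv.Perm.swap_induction_on' with
    | one => simp [h0]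
    | mul_swap g a b hab ih =>
      have h := hJ g (Equiv.swap a b)
      rw [Equiv.swap_inv] at h
      rw [two_nsmul, h, ih]
  have f_sq : ∀ z y, f (z * (y * y)) = f z := by
    intro z y
    have h := hJ (z * y) y
    rw [two_f, mul_inv_cancel_right, mul_assoc] at h
    have h2 := two_f z
    rw [two_nsmul] at h2
    exact add_right_cancel (h.trans h2.symm)
  have f_even : ∀ g ∈ alternatingGroup (Fin n), ∀ z, f (z * g) = f z := by
    intro g hg
    rw [← Equiv.Perm.closure_three_cycles_eq_alternating] at hg
    induction hg using Subgroup.closure_induction with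
    | mem c hc =>
      intro z
      -- A 3-cycle is the square of its inverse.
      have h3 : c ^ 3 = 1 := by rw [← hc.orderOf]; exact pow_orderOf_eq_one c
      have h : c = c⁻¹ * c⁻¹ := by
        rw [← mul_inv_rev, eq_inv_iff_mul_eq_one, ← h3, pow_succ, pow_two, mul_assoc]
      rw [h]
      exact f_sq z _
    | one => simp
    | mul a b _ _ ha hb => intro z; rw [← mul_assoc, hb, ha]
    | inv a _ ha => intro z; rw [← ha (z * a⁻¹), inv_mul_cancel_right]
  have f_zero : ∀ g ∈ alternatingGroup (Fin n), f g = 0 := by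
    intro g hg
    rw [← one_mul g, f_even g hg, h0]
  intro x y
  rcases Int.units_eq_one_or (Equiv.Perm.sign x) with hx | hx
  · have hc : y⁻¹ * x * y ∈ alternatingGroup (Fin n) := by
      simp [Equiv.Perm.mem_alternatingGroup, hx]
    have h := f_even _ hc y
    rw [mul_assoc, mul_inv_cancel_left] at h
    rw [h, f_zero x (Equiv.Perm.mem_alternatingGroup.2 hx), zero_add]
  · rcases Int.units_eq_one_or (Equiv.Perm.sign y) with hy | hy
    · have hm := Equiv.Perm.mem_alternatingGroup.2 hy
      rw [f_even y hm, f_zero y hm, add_zero]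
    · have hxy : x * y ∈ alternatingGroup (Fin n) := by
        simp [Equiv.Perm.mem_alternatingGroup, hx, hy]
      have hq : x⁻¹ * y ∈ alternatingGroup (Fin n) := by
        simp [Equiv.Perm.mem_alternatingGroup, hx, hy]
      have h := f_even _ hq x
      rw [mul_inv_cancel_left] at h
      rw [f_zero _ hxy, h, ← two_nsmul, two_f]
end

section
/- Let G be a group and H an abelian (additive) group, and let f : G → H satisfy f(e) = 0 and f(xy) + f(xy⁻¹) = 2f(x) for all x, y ∈ G. Then for all x, y, z ∈ G: f(xyz) + f(xzy) = 2f(xy) + 2f(xz) − 2f(x). -/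
theorem jensen_eq1_formula_xyz_xzy (G : Type*) [Group G] (H : Type*) [AddCommGroup H]
    (f : G → H) (h0 : f 1 = 0)
    (hJ : ∀ x y : G, f (x * y) + f (x * y⁻¹) = 2 • f x) :
    ∀ x y z : G, f (x * y * z) + f (x * z * y) = 2 • f (x * y) + 2 • f (x * z) - 2 • f x := by
  intro x y z
  -- The terms `f (x y z⁻¹)` and `f (x z y⁻¹)` left over from the first two instances are
  -- eliminated by the instance at `(x, y z⁻¹)`, since `(y z⁻¹)⁻¹ = z y⁻¹`.
  have h3 := hJ x (y * z⁻¹)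
  rw [mul_inv_rev, inv_inv, ← mul_assoc, ← mul_assoc] at h3
  rw [← hJ (x * y) z, ← hJ (x * z) y, ← h3]
  abel
end

section
/- Let G be a group and H an abelian (additive) group, and let f : G → H satisfy f(e) = 0 and f(xy) + f(xy⁻¹) = 2f(x) for all x, y ∈ G. Then for all x, y, z ∈ G: 2f(xyz) = 2f(xy) + 2f(xz) + 2f(yz) − 2f(x) − 2f(y) − 2f(z). -/
/-!
Taking `x = 1` in the equation shows that `f` is odd, and adding the equations for `(x, y)` and
`(y, x)` then gives `f (xy) + f (yx) = 2 f x + 2 f y`. This rule, applied to the three splittings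
of the cyclic permutations of `xyz`, yields a linear system in `f (xyz)`, `f (yzx)`, `f (zxy)`
which determines `2 f (xyz)`; a last application replaces `f (zx)` by `f (xz)`.
-/

theorem jensen_eq1_formula_two_xyz (G : Type*) [Group G] (H : Type*) [AddCommGroup H]
    (f : G → H) (h0 : f 1 = 0)
    (hJ : ∀ x y : G, f (x * y) + f (x * y⁻¹) = 2 • f x) :
    ∀ x y z : G, 2 • f (x * y * z) =
      2 • f (x * y) + 2 • f (x * z) + 2 • f (y * z) - 2 • f x - 2 • f y - 2 • f z := by
  have odd : ∀ y, f y + f y⁻¹ = 0 := fun y => by simpa [h0] using hJ 1 y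
  have swap : ∀ x y, f (x * y) + f (y * x) = 2 • f x + 2 • f y := by
    intro x y
    have h := odd (x * y⁻¹)
    rw [mul_inv_rev, inv_inv] at h
    rw [← hJ x y, ← hJ y x]
    linear_combination (norm := module) -h
  intro x y z
  have h1 := swap x (y * z)
  have h2 := swap y (z * x)
  have h3 := swap z (x * y)
  have h4 := swap x z
  simp only [← mul_assoc] at h1 h2 h3
  linear_combination (norm := module) h1 - h2 + h3 - (2 : ℤ) • h4
end

section
/- Let G be a group and H an abelian (additive) group, and let f : G → H satisfy f(e) = 0 and f(xy) + f(xy⁻¹) = 2f(x) for all x, y ∈ G. Then for all x, y, z ∈ G: f(xyz) − f(xzy) = 2f(yz) − 2f(y) − 2f(z). -/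
/-!
The key identity is `f (ab) + f (ba) = 2 f a + 2 f b`, obtained by adding Jensen's equation for
`(a, b)` and `(b, a)` and using that `f` is odd. Applied to the translate `t ↦ f (x t) - f x`, which
is again a normalized solution, it gives `f (xyz) + f (xzy) = 2 f (xy) + 2 f (xz) - 2 f x`.
Applied to the three pairs among the cyclic rotations `xyz`, `yzx`, `zxy`, it determines `2 f (xyz)`
as `2 f (xy) + 2 f (xz) + 2 f (yz) - 2 f x - 2 f y - 2 f z`; subtracting yields the formula.
-/

/-- Any normalized solution satisfies a symmetrized additivity law. -/
theorem jensen_mul_add_mul_swap {G : Type*} [Group G] {H : Type*} [AddCommGroup H]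
    (f : G → H) (h0 : f 1 = 0)
    (hJ : ∀ x y : G, f (x * y) + f (x * y⁻¹) = 2 • f x) (a b : G) :
    f (a * b) + f (b * a) = 2 • f a + 2 • f b := by
  have h1 := hJ a b
  have h2 := hJ b a
  have h3 := hJ 1 (a * b⁻¹)
  simp only [one_mul, mul_inv_rev, inv_inv, h0, smul_zero] at h3
  rw [← h1, ← h2, add_add_add_comm, h3, add_zero]

theorem jensen_eq1_formula_xyz_sub_xzy (G : Type*) [Group G] (H : Type*) [AddCommGroup H]
    (f : G → H) (h0 : f 1 = 0)
    (hJ : ∀ x y : G, f (x * y) + f (x * y⁻¹) = 2 • f x) :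
    ∀ x y z : G, f (x * y * z) - f (x * z * y) = 2 • f (y * z) - 2 • f y - 2 • f z := by
  intro x y z
  have hS := jensen_mul_add_mul_swap f h0 hJ
  have hT := jensen_mul_add_mul_swap (fun t => f (x * t) - f x) (by simp)
    (fun a b => by
      have h := hJ (x * a) b
      simp only [mul_assoc] at h
      simp only [smul_sub, ← h]
      abel) y z
  -- the three pairs of cyclic rotations of `xyz`
  have h1 := hS x (y * z)
  have h2 := hS (x * y) z
  have h3 := hS y (z * x)
  have h4 := hS x z
  simp only [mul_assoc] at *
  have e1 : f (x * (y * z)) = 2 • f x + 2 • f (y * z) - f (y * (z * x)) := eq_sub_of_add_eq h1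
  have e3 : f (y * (z * x)) = 2 • f y + 2 • f (z * x) - f (z * (x * y)) := eq_sub_of_add_eq h3
  have e2 : f (z * (x * y)) = 2 • f (x * y) + 2 • f z - f (x * (y * z)) := eq_sub_of_add_eq' h2
  have e4 : f (z * x) = 2 • f x + 2 • f z - f (x * z) := eq_sub_of_add_eq' h4
  have e5 : f (x * (z * y)) = 2 • (f (x * y) - f x) + 2 • (f (x * z) - f x)
      + 2 • f x - f (x * (y * z)) := by
    rw [← hT]; abel
  have e6 : 2 • f (x * (y * z)) = 2 • f x + 2 • f (y * z)
      - (2 • f y + 2 • (2 • f x + 2 • f z - f (x * z)) - (2 • f (x * y) + 2 • f z)) := by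
    rw [two_nsmul, ← e4]
    nth_rewrite 1 [e1]
    rw [e3, e2]
    abel
  have e7 : f (x * (y * z)) - f (x * (z * y)) = 2 • f (x * (y * z))
      - (2 • (f (x * y) - f x) + 2 • (f (x * z) - f x) + 2 • f x) := by
    rw [e5]; abel
  rw [e7, e6]
  abel
end

section
/- Let G be a group and H an abelian (additive) group, and let f : G → H satisfy f(e) = 0 and f(xy) + f(xy⁻¹) = 2f(x) for all x, y ∈ G. Then for every integer n and all x, y, z ∈ G: f(x yⁿ z) = n·f(xyz) − (n−1)·f(xz), where n·h denotes the integer multiple of h ∈ H. -/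
/-!
By Jensen's equation at the pair `(a * b ^ n, b)`, the bi-infinite sequence `n ↦ f (a * b ^ n)` has
vanishing second difference, so it is an arithmetic progression determined by `f a` and `f (a * b)`
(`jensen_mul_zpow`). The middle power reduces to this because
`x * y ^ n * z = (x * z) * (z⁻¹ * y * z) ^ n`.
-/

theorem jensen_mul_zpow {G : Type*} [Group G] {H : Type*} [AddCommGroup H] (f : G → H)
    (hJ : ∀ x y : G, f (x * y) + f (x * y⁻¹) = 2 • f x) (a b : G) (n : ℤ) :
    f (a * b ^ n) = n • f (a * b) - (n - 1) • f a := by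
  have step (m : ℤ) : f (a * b ^ (m + 1)) + f (a * b ^ (m - 1)) = 2 • f (a * b ^ m) := by
    have h := hJ (a * b ^ m) b
    rwa [mul_assoc, mul_assoc, ← zpow_add_one, ← zpow_sub_one] at h
  -- Two consecutive terms are carried, since the recurrence has order two.
  suffices h : f (a * b ^ n) = n • f (a * b) - (n - 1) • f a ∧
      f (a * b ^ (n + 1)) = (n + 1) • f (a * b) - n • f a from h.1
  induction n using Int.induction_on with
  | zero => simp
  | succ m ih =>
    refine ⟨by rw [ih.2, add_sub_cancel_right], ?_⟩
    have h := step (m + 1)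
    rw [add_sub_cancel_right, ih.1, ih.2] at h
    rw [eq_sub_of_add_eq h]
    module
  | pred m ih =>
    rw [sub_add_cancel]
    refine ⟨?_, ih.1⟩
    have h := step (-m)
    rw [ih.1, ih.2] at h
    rw [eq_sub_of_add_eq' h]
    module

theorem jensen_eq1_formula_pow_middle (G : Type*) [Group G] (H : Type*) [AddCommGroup H]
    (f : G → H) (h0 : f 1 = 0)
    (hJ : ∀ x y : G, f (x * y) + f (x * y⁻¹) = 2 • f x) :
    ∀ (n : ℤ) (x y z : G), f (x * y ^ n * z) = n • f (x * y * z) - (n - 1) • f (x * z) := by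
  intro n x y z
  have h := jensen_mul_zpow f hJ (x * z) (z⁻¹ * y * z) n
  have hconj : (z⁻¹ * y * z) ^ n = z⁻¹ * y ^ n * z := by
    simpa using conj_zpow (i := n) (a := z⁻¹) (b := y)
  rw [hconj] at h
  simpa [mul_assoc] using h
end

section
/- Let G be a group and H an abelian (additive) group, and let f : G → H satisfy f(e) = 0 and f(xy) + f(xy⁻¹) = 2f(x) for all x, y ∈ G. Then for every integer n and every x ∈ G: f(xⁿ) = n·f(x), where n·h denotes the integer multiple of h ∈ H. -/
/-! Applying the equation to the pair `(xᵏ⁺¹, x)` gives the second-order recurrence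
`f (xᵏ⁺²) + f (xᵏ) = 2 f (xᵏ⁺¹)`, which together with `f 1 = 0` forces `f (xᵏ) = k f x` for
natural `k`. The pair `(1, y)` shows that `f` is odd, which settles negative exponents. -/

theorem jensen_eq1_pow (G : Type*) [Group G] (H : Type*) [AddCommGroup H]
    (f : G → H) (h0 : f 1 = 0)
    (hJ : ∀ x y : G, f (x * y) + f (x * y⁻¹) = 2 • f x) :
    ∀ (n : ℤ) (x : G), f (x ^ n) = n • f x := by
  have hodd : ∀ y : G, f y⁻¹ = -f y := by
    intro y
    have h := hJ 1 y
    rw [one_mul, one_mul, h0, smul_zero] at h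
    exact (neg_eq_of_add_eq_zero_right h).symm
  have hnat : ∀ (x : G) (k : ℕ), f (x ^ k) = k • f x ∧ f (x ^ (k + 1)) = (k + 1) • f x := by
    intro x k
    induction k with
    | zero => simp [h0]
    | succ k ih =>
      refine ⟨ih.2, ?_⟩
      have h := hJ (x ^ (k + 1)) x
      rw [← pow_succ, pow_succ x k, mul_inv_cancel_right, ← pow_succ, ih.1, ih.2] at h
      rw [eq_sub_of_add_eq h]
      module
  intro n x
  obtain ⟨k, rfl | rfl⟩ := n.eq_nat_or_neg
  · rw [zpow_natCast, natCast_zsmul, (hnat x k).1]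
  · rw [zpow_neg, zpow_natCast, hodd, (hnat x k).1, neg_smul, natCast_zsmul]
end

section
/- Let n ≥ 1, let H be an abelian (additive) group, and let f : S_n → H satisfy f(e) = 0 and f(xy) + f(xy⁻¹) = 2f(x) for all x, y ∈ S_n. Let σ = (a b) and τ = (b c) be transpositions in S_n with a, b, c pairwise distinct. Then f(στ) = 0 and f(σ) + f(τ) = 0. -/
/-!
The argument takes place in the copy of `S₃` generated by `s = (a b)` and `t = (b c)`, using only
`s² = t² = 1` and the braid relation `sts = tst`. Taking `x = e` shows that `f` is odd, so
`2 f = 0` on involutions. For `r = st`, the pair `(r, r)` gives `3 f(r) = 0`, while `(r, s)` gives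
`2 f(r) = 2 f(sts) = 0`; hence `f(r) = 0`. Finally the pair `(sts, r)` gives
`f(s) + f(t) = 2 f(sts) = 0`.
-/

theorem jensen_of_braid {G H : Type*} [Group G] [AddCommGroup H] (f : G → H) (h0 : f 1 = 0)
    (hJ : ∀ x y : G, f (x * y) + f (x * y⁻¹) = 2 • f x) (s t : G)
    (hs : s * s = 1) (ht : t * t = 1) (hst : s * t * s = t * s * t) :
    f (s * t) = 0 ∧ f s + f t = 0 := by
  have hs' : s⁻¹ = s := inv_eq_of_mul_eq_one_left hs
  have ht' : t⁻¹ = t := inv_eq_of_mul_eq_one_left ht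
  have hinv : (s * t)⁻¹ = t * s := by rw [mul_inv_rev, hs', ht']
  have hsq : s * t * (s * t) = t * s := by
    rw [← mul_assoc, hst, mul_assoc, ht, mul_one]
  have hodd : f (s * t) + f (t * s) = 0 := by
    simpa [h0, hs', ht'] using hJ 1 (s * t)
  have hu : 2 • f (s * t * s) = 0 := by
    have h := hJ 1 (s * t * s)
    have e : (s * t * s)⁻¹ = s * t * s := by simp [hs', ht', mul_assoc]
    rw [e, one_mul, h0, smul_zero, ← two_nsmul] at h
    exact h
  have h2 : 2 • f (s * t) = 0 := by
    have h := hJ (s * t) s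
    rw [hs', ← two_nsmul, hu] at h
    exact h.symm
  have h3 : f (t * s) = 2 • f (s * t) := by
    have h := hJ (s * t) (s * t)
    rwa [hsq, mul_inv_cancel, h0, add_zero] at h
  refine ⟨by rwa [h3, h2, add_zero] at hodd, ?_⟩
  have h := hJ (s * t * s) (s * t)
  have e1 : s * t * s * (s * t) = s := by
    rw [mul_assoc (s * t), ← mul_assoc s s t, hs, one_mul, mul_assoc, ht, mul_one]
  have e2 : s * t * s * (t * s) = t := by
    rw [hst, mul_assoc (t * s), ← mul_assoc t t s, ht, one_mul, mul_assoc, hs, mul_one]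
  rwa [hinv, e1, e2, hu] at h

theorem jensen_eq1_adjacent_transpositions (n : ℕ) (hn : 1 ≤ n) (H : Type*) [AddCommGroup H]
    (f : Equiv.Perm (Fin n) → H) (h0 : f 1 = 0)
    (hJ : ∀ x y : Equiv.Perm (Fin n), f (x * y) + f (x * y⁻¹) = 2 • f x)
    (a b c : Fin n) (hab : a ≠ b) (hbc : b ≠ c) (hac : a ≠ c) :
    f (Equiv.swap a b * Equiv.swap b c) = 0 ∧ f (Equiv.swap a b) + f (Equiv.swap b c) = 0 := by
  refine jensen_of_braid f h0 hJ _ _ (Equiv.swap_mul_self a b) (Equiv.swap_mul_self b c) ?_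
  -- Both sides are the transposition `(a c)`.
  have h1 := Equiv.swap_mul_swap_mul_swap (x := c) (y := b) (z := a) hbc.symm hac.symm
  have h2 := Equiv.swap_mul_swap_mul_swap (x := a) (y := b) (z := c) hab hac
  rw [Equiv.swap_comm b a, Equiv.swap_comm c b] at h1
  rw [h1, h2, Equiv.swap_comm]
end

section
/- Let n ≥ 1, let H be an abelian (additive) group, and let f : S_n → H satisfy f(e) = 0 and f(xy) + f(xy⁻¹) = 2f(x) for all x, y ∈ S_n. Let σ = (a b) and τ = (c d) be transpositions in S_n with a, b, c, d pairwise distinct. Then f(στ) = 0 and f(σ) + f(τ) = 0. -/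
/-!
For an involution `y` the equation reads `2 f(xy) = 2 f(x)`; since transpositions generate the
symmetric group and `f(e) = 0`, it follows that `2 f(x) = 0` for products of transpositions. Replacing
`x` by `xy` in the equation gives `f(xy²) + f(x) = 2 f(xy) = 0`. The double transposition
`(a b)(c d)` is the square of the 4-cycle `q = (a c)(b d)(a b)`, so `x = e` yields
`f((a b)(c d)) = 0`, and `x = (c d)` yields `f((a b)) + f((c d)) = 0`.
-/

theorem jensen_eq1_disjoint_transpositions (n : ℕ) (hn : 1 ≤ n) (H : Type*) [AddCommGroup H]
    (f : Equiv.Perm (Fin n) → H) (h0 : f 1 = 0)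
    (hJ : ∀ x y : Equiv.Perm (Fin n), f (x * y) + f (x * y⁻¹) = 2 • f x)
    (a b c d : Fin n) (hab : a ≠ b) (hac : a ≠ c) (had : a ≠ d)
    (hbc : b ≠ c) (hbd : b ≠ d) (hcd : c ≠ d) :
    f (Equiv.swap a b * Equiv.swap c d) = 0 ∧ f (Equiv.swap a b) + f (Equiv.swap c d) = 0 := by
  have hs : ∀ (x : Equiv.Perm (Fin n)) (i j : Fin n), 2 • f (x * Equiv.swap i j) = 2 • f x := by
    intro x i j
    have h := hJ x (Equiv.swap i j)
    rwa [Equiv.swap_inv, ← two_nsmul] at h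
  have h2 : ∀ i j : Fin n, 2 • f (Equiv.swap i j) = 0 := by
    intro i j
    have h := hs 1 i j
    rwa [one_mul, h0, smul_zero] at h
  have hsq : ∀ x y : Equiv.Perm (Fin n), f (x * y * y) + f x = 2 • f (x * y) := by
    intro x y
    simpa using hJ (x * y) y
  -- Conjugation by `(a c)(b d)` exchanges `(a b)` and `(c d)`, hence `q² = (a b)(c d)`.
  have hq : (Equiv.swap a c * Equiv.swap b d * Equiv.swap a b) *
      (Equiv.swap a c * Equiv.swap b d * Equiv.swap a b) = Equiv.swap a b * Equiv.swap c d := by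
    ext x
    simp only [Equiv.Perm.mul_apply, Equiv.swap_apply_def]
    grind
  have hcomm : Equiv.swap c d * (Equiv.swap a b * Equiv.swap c d) = Equiv.swap a b := by
    ext x
    simp only [Equiv.Perm.mul_apply, Equiv.swap_apply_def]
    grind
  constructor
  · have h := hsq 1 (Equiv.swap a c * Equiv.swap b d * Equiv.swap a b)
    rwa [one_mul, hq, h0, add_zero, hs, hs, h2] at h
  · have h := hsq (Equiv.swap c d) (Equiv.swap a c * Equiv.swap b d * Equiv.swap a b)
    rwa [mul_assoc, hq, hcomm, ← mul_assoc, ← mul_assoc, hs, hs, hs, h2] at h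
end

section
/- Let n ≥ 1, let H be an abelian (additive) group, and let f : S_n → H satisfy f(e) = 0 and f(xy) + f(xy⁻¹) = 2f(x) for all x, y ∈ S_n. Then 2f(x) = 0 for every x ∈ S_n. -/
theorem jensen_eq1_two_torsion (n : ℕ) (hn : 1 ≤ n) (H : Type*) [AddCommGroup H]
    (f : Equiv.Perm (Fin n) → H) (h0 : f 1 = 0)
    (hJ : ∀ x y : Equiv.Perm (Fin n), f (x * y) + f (x * y⁻¹) = 2 • f x) :
    ∀ x : Equiv.Perm (Fin n), 2 • f x = 0 := by
  intro x
  -- A transposition `t` is its own inverse, so the equation at `(g, t)` reads `2 f(gt) = 2 f(g)`;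
  -- transpositions generate the symmetric group, so `2 f` is constant.
  induction x using Equiv.Perm.swap_induction_on' with
  | one => simp [h0]
  | mul_swap g a b _ ih =>
    have h := hJ g (Equiv.swap a b)
    rw [Equiv.swap_inv, ← two_nsmul, ih] at h
    exact h
end

section
/- Let n ≥ 1, let H be an abelian (additive) group, and let f : S_n → H satisfy f(e) = 0 and f(xy) + f(xy⁻¹) = 2f(x) for all x, y ∈ S_n. Then for all x, y, z ∈ S_n: f(xyz) = f(xzy) and f(xyz) = f(yxz). -/
/-!
Taking `y` to be a transposition gives `2 f(x y) = 2 f(x)`; since transpositions generate the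
symmetric group and `f 1 = 0`, it follows that `2 f = 0`. The equation then reads
`f(x y) = f(x y⁻¹)`, i.e. `f` is invariant under right multiplication by squares. Every
commutator is a product of three squares, so `f` is also invariant under right multiplication by
commutators. Both `(x z y)⁻¹ (x y z)` and `(y x z)⁻¹ (x y z)` are commutators.
-/

/-- A commutator is a product of three squares, so invariance under squares gives invariance
under commutators. -/
lemma apply_mul_commutator_of_apply_mul_sq {G H : Type*} [Group G] (f : G → H)
    (hsq : ∀ x y : G, f (x * (y * y)) = f x) (x a b : G) :
    f (x * (a * b * a⁻¹ * b⁻¹)) = f x := by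
  have key : x * (a * b * a⁻¹ * b⁻¹) =
      x * ((a * b) * (a * b)) * ((b⁻¹ * a⁻¹ * b) * (b⁻¹ * a⁻¹ * b)) * (b⁻¹ * b⁻¹) := by
    group
  rw [key, hsq, hsq, hsq]

theorem jensen_eq1_rearrangement (n : ℕ) (hn : 1 ≤ n) (H : Type*) [AddCommGroup H]
    (f : Equiv.Perm (Fin n) → H) (h0 : f 1 = 0)
    (hJ : ∀ x y : Equiv.Perm (Fin n), f (x * y) + f (x * y⁻¹) = 2 • f x) :
    ∀ x y z : Equiv.Perm (Fin n), f (x * y * z) = f (x * z * y) ∧ f (x * y * z) = f (y * x * z) := by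
  have h2 : ∀ x, 2 • f x = 0 := by
    intro x
    induction x using Equiv.Perm.swap_induction_on' with
    | one => simp [h0]
    | mul_swap g a b _ ih =>
      have h := hJ g (Equiv.swap a b)
      rw [Equiv.swap_inv, ← two_nsmul] at h
      rw [h, ih]
  have hsq : ∀ x y, f (x * (y * y)) = f x := by
    intro x y
    have h := hJ (x * y) y
    rw [h2, mul_inv_cancel_right, mul_assoc] at h
    have hx := h2 x
    rw [two_nsmul] at hx
    exact add_right_cancel (h.trans hx.symm)
  have hcomm := apply_mul_commutator_of_apply_mul_sq f hsq
  intro x y z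
  constructor
  · rw [← hcomm (x * z * y) y⁻¹ z⁻¹]
    congr 1
    group
  · rw [← hcomm (y * x * z) (z⁻¹ * x⁻¹ * z) (z⁻¹ * y⁻¹ * z)]
    congr 1
    group
end

section
/- Let n ≥ 1, let H be an abelian (additive) group, and let f : S_n → H satisfy f(e) = 0 and f(xy) + f(xy⁻¹) = 2f(x) for all x, y ∈ S_n. If x ∈ S_n is an even permutation (i.e. its sign is +1), then f(x) = 0. -/
/-!
Taking `y` to be a transposition `t` in the functional equation gives `2 f(xt) = 2 f(x)`. Since
transpositions generate the symmetric group, `2 f` is constant, hence zero. The equation then reads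
`f(xy) = f(xy⁻¹)`, so `f(xy²) = f(x)`: `f` is invariant under right multiplication by squares.
Every 3-cycle `c` is the square of `c²`, and the 3-cycles generate the alternating group, so `f` is
equal to `f(e) = 0` on all even permutations.
-/

/-- The right periods of a function on a group form a subgroup; so right invariance under
generators gives right invariance under the subgroup they generate. -/
lemma right_invariant_of_mem_closure {G A : Type*} [Group G] {g : G → A} {s : Set G}
    (hs : ∀ t ∈ s, ∀ x, g (x * t) = g x) {y : G} (hy : y ∈ Subgroup.closure s) (x : G) :
    g (x * y) = g x := by
  induction hy using Subgroup.closure_induction generalizing x with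
  | mem t ht => exact hs t ht x
  | one => rw [mul_one]
  | mul a b _ _ ha hb => rw [← mul_assoc, hb, ha]
  | inv a _ ha => rw [← ha (x * a⁻¹), inv_mul_cancel_right]

theorem jensen_eq1_even_perm (n : ℕ) (hn : 1 ≤ n) (H : Type*) [AddCommGroup H]
    (f : Equiv.Perm (Fin n) → H) (h0 : f 1 = 0)
    (hJ : ∀ x y : Equiv.Perm (Fin n), f (x * y) + f (x * y⁻¹) = 2 • f x)
    (x : Equiv.Perm (Fin n)) (hx : Equiv.Perm.sign x = 1) :
    f x = 0 := by
  have two_smul_eq_zero : ∀ y, 2 • f y = 0 := fun y => by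
    have hy : y ∈ Subgroup.closure {t : Equiv.Perm (Fin n) | t.IsSwap} := by
      rw [Equiv.Perm.closure_isSwap]
      trivial
    have hswap : ∀ t ∈ {t : Equiv.Perm (Fin n) | t.IsSwap}, ∀ z, 2 • f (z * t) = 2 • f z := by
      rintro _ ⟨a, b, _, rfl⟩ z
      rw [← hJ z (Equiv.swap a b), Equiv.swap_inv, two_nsmul]
    simpa [h0] using right_invariant_of_mem_closure (g := fun z => 2 • f z) hswap hy 1
  have mul_sq : ∀ z y, f (z * (y * y)) = f z := fun z y => by
    have h := hJ (z * y) y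
    rw [two_smul_eq_zero, mul_inv_cancel_right, mul_assoc] at h
    have h2 := two_smul_eq_zero z
    rw [two_nsmul] at h2
    exact add_right_cancel (h.trans h2.symm)
  have hx' : x ∈ Subgroup.closure {c : Equiv.Perm (Fin n) | c.IsThreeCycle} := by
    rw [Equiv.Perm.closure_three_cycles_eq_alternating]
    exact Equiv.Perm.mem_alternatingGroup.mpr hx
  have hcycle : ∀ c ∈ {c : Equiv.Perm (Fin n) | c.IsThreeCycle}, ∀ z, f (z * c) = f z := by
    intro c hc z
    have h3 : c ^ 3 = 1 := by
      rw [← Equiv.Perm.IsThreeCycle.orderOf hc]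
      exact pow_orderOf_eq_one c
    have hsq : c ^ 2 * c ^ 2 = c := by
      rw [← pow_add, show 2 + 2 = 3 + 1 from rfl, pow_succ, h3, one_mul]
    rw [← mul_sq z (c ^ 2), hsq]
  simpa [h0] using right_invariant_of_mem_closure hcycle hx' 1
end

section
/- Let n ≥ 1, let H be an abelian (additive) group, and let f : S_n → H satisfy f(e) = 0 and f(xy) + f(xy⁻¹) = 2f(x) for all x, y ∈ S_n. If x ∈ S_n is written as a product x = σ₁σ₂⋯σ_r of transpositions with r odd, then f(x) = −f(σ_r), where σ_r is the last transposition in the decomposition. -/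
/-!
Taking `y` to be a transposition in the equation gives `2 f(xy) = 2 f(x)`; transpositions generate
the symmetric group and `f(e) = 0`, so `2 f = 0` identically. The equation then reads
`f(xy) = f(xy⁻¹)`, i.e. `f` is invariant under right multiplication by squares. Every 3-cycle `g`
is a square (`g = (g²)²`) and the 3-cycles generate the alternating group, so `f` depends only on
the sign of its argument. An odd product of transpositions has the same sign as its last factor,
and `f = -f`.
-/

lemma jensen_two_nsmul_eq_zero {n : ℕ} {H : Type*} [AddCommGroup H]
    {f : Equiv.Perm (Fin n) → H} (h0 : f 1 = 0)
    (hJ : ∀ x y : Equiv.Perm (Fin n), f (x * y) + f (x * y⁻¹) = 2 • f x)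
    (x : Equiv.Perm (Fin n)) : 2 • f x = 0 := by
  induction x using Equiv.Perm.swap_induction_on' with
  | one => simp [h0]
  | mul_swap g a b _ ih =>
    have h := hJ g (Equiv.swap a b)
    rwa [Equiv.swap_inv, ih, ← two_nsmul] at h

lemma jensen_mul_sq {n : ℕ} {H : Type*} [AddCommGroup H]
    {f : Equiv.Perm (Fin n) → H} (h0 : f 1 = 0)
    (hJ : ∀ x y : Equiv.Perm (Fin n), f (x * y) + f (x * y⁻¹) = 2 • f x)
    (z y : Equiv.Perm (Fin n)) : f (z * (y * y)) = f z := by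
  have h := hJ (z * y) y
  have h2 := jensen_two_nsmul_eq_zero h0 hJ z
  rw [jensen_two_nsmul_eq_zero h0 hJ, mul_inv_cancel_right, mul_assoc] at h
  rw [two_nsmul] at h2
  exact add_right_cancel (h.trans h2.symm)

lemma jensen_mul_even {n : ℕ} {H : Type*} [AddCommGroup H]
    {f : Equiv.Perm (Fin n) → H} (h0 : f 1 = 0)
    (hJ : ∀ x y : Equiv.Perm (Fin n), f (x * y) + f (x * y⁻¹) = 2 • f x)
    (g : Equiv.Perm (Fin n)) (hg : Equiv.Perm.sign g = 1) (z : Equiv.Perm (Fin n)) :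
    f (z * g) = f z := by
  rw [← Equiv.Perm.mem_alternatingGroup, ← Equiv.Perm.closure_three_cycles_eq_alternating] at hg
  induction hg using Subgroup.closure_induction generalizing z with
  | mem g hg =>
    have h3 : g ^ 3 = 1 := by
      rw [← Equiv.Perm.IsThreeCycle.orderOf hg]
      exact pow_orderOf_eq_one g
    have h4 : g = (g ^ 2) * (g ^ 2) := by
      rw [← pow_add, show 2 + 2 = 3 + 1 from rfl, pow_succ, h3, one_mul]
    rw [h4]
    exact jensen_mul_sq h0 hJ z _
  | one => rw [mul_one]
  | mul a b _ _ iha ihb => rw [← mul_assoc, ihb, iha]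
  | inv a _ ih => rw [← ih (z * a⁻¹), inv_mul_cancel_right]

theorem jensen_eq1_odd_perm (n : ℕ) (hn : 1 ≤ n) (H : Type*) [AddCommGroup H]
    (f : Equiv.Perm (Fin n) → H) (h0 : f 1 = 0)
    (hJ : ∀ x y : Equiv.Perm (Fin n), f (x * y) + f (x * y⁻¹) = 2 • f x)
    (x : Equiv.Perm (Fin n)) (l : List (Equiv.Perm (Fin n)))
    (hl : ∀ σ ∈ l, σ.IsSwap) (hx : x = l.prod) (hodd : Odd l.length) (hne : l ≠ []) :
    f x = - f (l.getLast hne) := by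
  have hs : Equiv.Perm.sign x = -1 := by
    rw [hx, Equiv.Perm.sign_prod_list_swap hl, hodd.neg_one_pow]
  have hσ : Equiv.Perm.sign (l.getLast hne) = -1 := (hl _ (List.getLast_mem hne)).sign_eq
  have h := jensen_mul_even h0 hJ ((l.getLast hne)⁻¹ * x) (by simp [hs, hσ]) (l.getLast hne)
  have h2 := jensen_two_nsmul_eq_zero h0 hJ (l.getLast hne)
  rw [mul_inv_cancel_left] at h
  rw [two_nsmul] at h2
  rw [h]
  exact eq_neg_of_add_eq_zero_left h2
end

section
/- Let n ≥ 1 and let H be an abelian (additive) group. If f : S_n → H satisfies f(e) = 0 and f(xy) + f(y⁻¹x) = 2f(x) for all x, y ∈ S_n, then f is a group homomorphism from (S_n, ·) to (H, +), i.e. f(xy) = f(x) + f(y) for all x, y ∈ S_n. -/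
/-!
Taking `x = 1` in the equation shows that `f` is odd, so the equation reads
`f (x * y) = 2 • f x + f (x⁻¹ * y)`. Putting `x * z` for `y` gives
`f (x * x * z) = f (x * x) + f z`: left multiplication by a square is additive. The elements
with this property form a subgroup, and every 3-cycle is a square, so it contains the alternating
group. By oddness right multiplication by even permutations is additive too. If `x` and `y` are
both odd, then `x⁻¹ * y` is even, and `f (x * y) = 2 • f x + f (x⁻¹ * y) = f x + f y`.
-/

/-- The elements `s` of a group for which `f (s * z) = f s + f z` for all `z`. -/
def leftAdditive {G H : Type*} [Group G] [AddCommGroup H] (f : G → H) (h0 : f 1 = 0) :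
    Subgroup G where
  carrier := {s | ∀ z, f (s * z) = f s + f z}
  one_mem' z := by simp [h0]
  mul_mem' {a b} ha hb z := by
    rw [mul_assoc, ha, hb, ha, add_assoc]
  inv_mem' {a} ha z := by
    have h1 := ha (a⁻¹ * z)
    have h2 := ha a⁻¹
    rw [mul_inv_cancel_left] at h1
    rw [mul_inv_cancel, h0] at h2
    rw [h1, ← add_assoc, add_comm (f a⁻¹), ← h2, zero_add]

theorem jensen_eq2_symm_group_hom (n : ℕ) (hn : 1 ≤ n) (H : Type*) [AddCommGroup H]
    (f : Equiv.Perm (Fin n) → H) (h0 : f 1 = 0)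
    (hJ : ∀ x y : Equiv.Perm (Fin n), f (x * y) + f (y⁻¹ * x) = 2 • f x) :
    ∀ x y : Equiv.Perm (Fin n), f (x * y) = f x + f y := by
  have hodd : ∀ y, f y⁻¹ = -f y := fun y => by
    have h := hJ 1 y
    simp only [one_mul, mul_one, h0, smul_zero] at h
    exact (neg_eq_of_add_eq_zero_right h).symm
  have hJ' : ∀ x y, f (x * y) = 2 • f x + f (x⁻¹ * y) := fun x y => by
    have h := hodd (x⁻¹ * y)
    rw [mul_inv_rev, inv_inv] at h
    rw [← hJ x y, h]
    abel
  have hsq : ∀ x, x * x ∈ leftAdditive f h0 := fun x z => by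
    have h1 := hJ' x (x * z)
    have h2 := hJ' x x
    rw [inv_mul_cancel_left, ← mul_assoc] at h1
    rw [inv_mul_cancel, h0, add_zero] at h2
    rw [h1, h2]
  have halt : alternatingGroup (Fin n) ≤ leftAdditive f h0 := by
    rw [← Equiv.Perm.closure_three_cycles_eq_alternating, Subgroup.closure_le]
    intro c hc
    have h3 : c ^ 3 = 1 := by
      rw [← Equiv.Perm.IsThreeCycle.orderOf hc]
      exact pow_orderOf_eq_one c
    -- A 3-cycle `c` is the square of `c ^ 2`.
    have hc4 : c = c ^ 2 * c ^ 2 := by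
      rw [← pow_add, show 2 + 2 = 3 + 1 from rfl, pow_succ, h3, one_mul]
    rw [hc4]
    exact hsq _
  have hleft : ∀ s ∈ alternatingGroup (Fin n), ∀ z, f (s * z) = f s + f z :=
    fun s hs => halt hs
  have hright : ∀ s ∈ alternatingGroup (Fin n), ∀ z, f (z * s) = f z + f s := by
    intro s hs z
    have h := hleft s⁻¹ (inv_mem hs) z⁻¹
    rw [← mul_inv_rev, hodd, hodd, hodd] at h
    rw [← neg_neg (f (z * s)), h]
    abel
  intro x y
  by_cases hx : x ∈ alternatingGroup (Fin n)
  · exact hleft x hx y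
  by_cases hy : y ∈ alternatingGroup (Fin n)
  · exact hright y hy x
  have hxy : x⁻¹ * y ∈ alternatingGroup (Fin n) := by
    rw [Equiv.Perm.mem_alternatingGroup] at *
    rw [map_mul, Equiv.Perm.sign_inv, (Int.units_eq_one_or _).resolve_left hx,
      (Int.units_eq_one_or _).resolve_left hy]
    rfl
  have h := hright _ hxy x
  rw [mul_inv_cancel_left] at h
  rw [hJ', h]
  abel
end

section
/- Let G be a group and H an abelian (additive) group, and let f : G → H satisfy f(e) = 0 and f(xy) + f(y⁻¹x) = 2f(x) for all x, y ∈ G. Then for every integer n and every x ∈ G: f(xⁿ) = n·f(x), where n·h denotes the integer multiple of h ∈ H. -/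
theorem jensen_eq2_pow (G : Type*) [Group G] (H : Type*) [AddCommGroup H]
    (f : G → H) (h0 : f 1 = 0)
    (hJ : ∀ x y : G, f (x * y) + f (y⁻¹ * x) = 2 • f x) :
    ∀ (n : ℤ) (x : G), f (x ^ n) = n • f x := by
  intro n x
  -- The pair `(x ^ m, x)` in the equation makes `m ↦ f (x ^ m)` an arithmetic progression on `ℤ`;
  -- it is determined by its two consecutive values `0` and `f x` at `m = 0, 1`.
  have step : ∀ m : ℤ, f (x ^ (m + 1)) + f (x ^ (m - 1)) = 2 • f (x ^ m) := by
    intro m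
    have h := hJ (x ^ m) x
    rwa [← zpow_add_one, ← zpow_neg_one, ← zpow_add, neg_add_eq_sub] at h
  suffices h : f (x ^ n) = n • f x ∧ f (x ^ (n + 1)) = (n + 1) • f x from h.1
  induction n using Int.induction_on with
  | zero => simp [h0]
  | succ k ih =>
    refine ⟨ih.2, ?_⟩
    have h := step (k + 1)
    rw [add_sub_cancel_right, ih.1, ih.2] at h
    rw [eq_sub_of_add_eq h]
    module
  | pred k ih =>
    rw [sub_add_cancel]
    refine ⟨?_, ih.1⟩
    have h := step (-k)
    rw [ih.1, ih.2] at h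
    rw [eq_sub_of_add_eq' h]
    module
end

section
/- Let G be a group and H an abelian (additive) group, and let f : G → H satisfy f(e) = 0 and f(xy) + f(y⁻¹x) = 2f(x) for all x, y ∈ G. Then for all x, y, z ∈ G: f(x y² z) = f(xz) + 2f(y). -/
/-!
Taking `x = 1` shows that `f` is odd, and the equation then gives `f (a² b) = f b + 2 f a` and,
by oddness, `f (b a²) = f b + 2 f a`. Evaluating `f` on `(a b)² a = a (b a)²` in both ways yields
`2 f (a b) = 2 f (b a)`, so `2 f` is conjugation invariant. The claim follows from
`x y² z = (x y x⁻¹)² (x z)`.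
-/

theorem jensen_eq2_square_middle (G : Type*) [Group G] (H : Type*) [AddCommGroup H]
    (f : G → H) (h0 : f 1 = 0)
    (hJ : ∀ x y : G, f (x * y) + f (y⁻¹ * x) = 2 • f x) :
    ∀ x y z : G, f (x * y ^ 2 * z) = f (x * z) + 2 • f y := by
  have odd : ∀ a, f a⁻¹ = - f a := by
    intro a
    have h := hJ 1 a
    simp only [one_mul, mul_one, h0, smul_zero] at h
    exact (neg_eq_of_add_eq_zero_right h).symm
  have left : ∀ a b, f (a ^ 2 * b) = f b + 2 • f a := by
    intro a b
    have h := hJ a (a * b)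
    have e1 : a * (a * b) = a ^ 2 * b := by rw [pow_two, mul_assoc]
    have e2 : (a * b)⁻¹ * a = b⁻¹ := by group
    rw [e1, e2, odd] at h
    rw [← h]; abel
  have right : ∀ a b, f (b * a ^ 2) = f b + 2 • f a := by
    intro a b
    have h := left a⁻¹ b⁻¹
    have e : (a⁻¹) ^ 2 * b⁻¹ = (b * a ^ 2)⁻¹ := by simp
    rw [e, odd, odd, odd] at h
    rw [← neg_inj, h]; abel
  have comm : ∀ a b, 2 • f (a * b) = 2 • f (b * a) := by
    intro a b
    have e : (a * b) ^ 2 * a = a * (b * a) ^ 2 := by simp only [pow_two, mul_assoc]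
    have h := left (a * b) a
    rw [e, right] at h
    exact (add_left_cancel h).symm
  intro x y z
  have e : x * y ^ 2 * z = (x * y * x⁻¹) ^ 2 * (x * z) := by
    simp [pow_two, mul_assoc]
  rw [e, left, comm, inv_mul_cancel_left]
end

section
/- Let G be a group and H an abelian (additive) group, and let f : G → H satisfy f(e) = 0 and f(xy) + f(y⁻¹x) = 2f(x) for all x, y ∈ G. Then for all x, y, z ∈ G: f(xyz) + f(xzy) = 2f(xy) + 2f(xz) − 2f(x), and f(xyz) + f(yxz) = 2f(xz) + 2f(yz) − 2f(z), and f(xyz) − f(xzy) = 2f(yz) − 2f(y) − 2f(z). -/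
/-!
Taking `x = 1` in the equation shows that `f` is odd, so the equation becomes
`f (a * b) = f (a⁻¹ * b) + 2 f a`. Moving a right factor to the left with both forms gives the
exchange rule `f (a * b) + f (b * a) = 2 f a + 2 f b`. The first formula follows by inverting
`x * y`, then `y⁻¹`, on the left of `z`, exchanging, and inverting `x⁻¹`. The second formula is the
first one read on inverses, and the third is a linear combination of the first formula and
exchange rules for cyclic shifts.
-/

theorem jensen_eq2_formulae (G : Type*) [Group G] (H : Type*) [AddCommGroup H]
    (f : G → H) (h0 : f 1 = 0)
    (hJ : ∀ x y : G, f (x * y) + f (y⁻¹ * x) = 2 • f x) :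
    ∀ x y z : G,
      f (x * y * z) + f (x * z * y) = 2 • f (x * y) + 2 • f (x * z) - 2 • f x ∧
      f (x * y * z) + f (y * x * z) = 2 • f (x * z) + 2 • f (y * z) - 2 • f z ∧
      f (x * y * z) - f (x * z * y) = 2 • f (y * z) - 2 • f y - 2 • f z := by
  have odd : ∀ a, f a⁻¹ = - f a := by
    intro a
    have h := hJ 1 a
    simp only [one_mul, mul_one, h0, smul_zero] at h
    exact (neg_eq_of_add_eq_zero_right h).symm
  have left_inv : ∀ a b, f (a * b) = f (a⁻¹ * b) + 2 • f a := by
    intro a b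
    have h := hJ a b
    have h' := odd (a⁻¹ * b)
    rw [mul_inv_rev, inv_inv] at h'
    linear_combination (norm := module) (1 : ℤ) • h - (1 : ℤ) • h'
  have exch : ∀ a b, f (a * b) + f (b * a) = 2 • f a + 2 • f b := by
    intro a b
    linear_combination (norm := module) (1 : ℤ) • hJ a b + (1 : ℤ) • left_inv b a
  have first : ∀ x y z,
      f (x * y * z) + f (x * z * y) = 2 • f (x * y) + 2 • f (x * z) - 2 • f x := by
    intro x y z
    have h1 := left_inv (x * y) z
    have h2 := left_inv y (x⁻¹ * z)
    have h3 := exch y (x⁻¹ * z)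
    have h4 := left_inv x (z * y)
    have h5 := left_inv x z
    simp only [mul_inv_rev, mul_assoc] at *
    linear_combination (norm := module) (1 : ℤ) • h1 - (1 : ℤ) • h2 + (1 : ℤ) • h3 +
      (1 : ℤ) • h4 - (2 : ℤ) • h5
  intro x y z
  refine ⟨first x y z, ?_, ?_⟩
  · have h := first z⁻¹ y⁻¹ x⁻¹
    simp only [← mul_inv_rev, odd] at h
    simp only [mul_assoc] at *
    linear_combination (norm := module) (-1 : ℤ) • h
  · have h1 := exch (y * z) x
    have h2 := first y z x
    have h3 := exch (y * x) z
    have h4 := exch (z * y) x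
    have h5 := exch y z
    simp only [mul_assoc] at *
    linear_combination (norm := module) (1 : ℤ) • h1 - (1 : ℤ) • h2 + (1 : ℤ) • h3 -
      (1 : ℤ) • h4 - (2 : ℤ) • h5
end

section
/- Let n ≥ 1, let H be an abelian (additive) group, and let f : S_n → H satisfy f(e) = 0 and f(xy) + f(y⁻¹x) = 2f(x) for all x, y ∈ S_n. Let σ = (a b) and τ = (b c) be transpositions in S_n with a, b, c pairwise distinct. Then f(στ) = 0 and f(σ) + f(τ) = 0. -/
/-! The two transpositions `s`, `t` are involutions satisfying the braid relation, and only this is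
used. Write `r = s * t` (of order dividing 3) and `u = s * t * s`. The equation at `x = 1` makes `f`
odd, hence `2 f = 0` on involutions. At `(r, r)` it gives `3 f(r) = 0`, and at `(r, s)` it gives
`f(u) + f(t) = 2 f(r)`; doubling the latter yields `4 f(r) = 0`, so `f(r) = 0`. At `(r, t)` it gives
`f(s) + f(u) = 2 f(r) = 0`, so `f(s) = -f(u) = f(t)` and `f(s) + f(t) = 2 f(t) = 0`. -/

theorem jensen_eq2_of_braid {G H : Type*} [Group G] [AddCommGroup H] (f : G → H) (h0 : f 1 = 0)
    (hJ : ∀ x y : G, f (x * y) + f (y⁻¹ * x) = 2 • f x) (s t : G)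
    (hs : s * s = 1) (ht : t * t = 1) (hst : s * t * s = t * s * t) :
    f (s * t) = 0 ∧ f s + f t = 0 := by
  have hs' : s⁻¹ = s := inv_eq_of_mul_eq_one_left hs
  have ht' : t⁻¹ = t := inv_eq_of_mul_eq_one_left ht
  have odd : ∀ y, f y + f y⁻¹ = 0 := fun y => by simpa [h0] using hJ 1 y
  have hu' : (s * t * s)⁻¹ = s * t * s := by simp [hs', ht', mul_assoc]
  have ft := odd t
  have fu := odd (s * t * s)
  have fr := odd (s * t)
  rw [ht'] at ft
  rw [hu'] at fu
  have hrr : (s * t) * (s * t) = (s * t)⁻¹ := by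
    rw [mul_inv_rev, hs', ht', ← mul_assoc, hst, mul_assoc, ht, mul_one]
  have e1 := hJ (s * t) (s * t)
  rw [hrr, inv_mul_cancel, h0] at e1
  have e2 := hJ (s * t) s
  rw [hs', ← mul_assoc s s t, hs, one_mul] at e2
  have e3 := hJ (s * t) t
  rw [ht', mul_assoc s t t, ht, mul_one, ← mul_assoc t s t, ← hst] at e3
  have r0 : f (s * t) = 0 := by
    linear_combination (norm := module) fu + ft - 2 • e2 - (fr - e1)
  refine ⟨r0, ?_⟩
  rw [r0] at e2 e3
  linear_combination (norm := module) e3 - e2 + ft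

theorem jensen_eq2_adjacent_transpositions (n : ℕ) (hn : 1 ≤ n) (H : Type*) [AddCommGroup H]
    (f : Equiv.Perm (Fin n) → H) (h0 : f 1 = 0)
    (hJ : ∀ x y : Equiv.Perm (Fin n), f (x * y) + f (y⁻¹ * x) = 2 • f x)
    (a b c : Fin n) (hab : a ≠ b) (hbc : b ≠ c) (hac : a ≠ c) :
    f (Equiv.swap a b * Equiv.swap b c) = 0 ∧ f (Equiv.swap a b) + f (Equiv.swap b c) = 0 := by
  refine jensen_eq2_of_braid f h0 hJ _ _ (Equiv.swap_mul_self _ _) (Equiv.swap_mul_self _ _) ?_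
  -- Both sides of the braid relation are the transposition `(a c)`.
  rw [Equiv.swap_mul_swap_mul_swap hab hac, Equiv.swap_comm a b, Equiv.swap_comm b c,
    Equiv.swap_mul_swap_mul_swap hbc.symm hac.symm, Equiv.swap_comm]
end

section
/- Let n ≥ 1, let H be an abelian (additive) group, and let f : S_n → H satisfy f(e) = 0 and f(xy) + f(y⁻¹x) = 2f(x) for all x, y ∈ S_n. Let σ = (a b) and τ = (c d) be transpositions in S_n with a, b, c, d pairwise distinct. Then f(στ) = 0 and f(σ) + f(τ) = 0. -/
/-!
Putting `x = 1` gives `f y⁻¹ = -f y`, so `2 f` vanishes on involutions. If `p, u` are involutions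
with `p u p = u p u`, then `p u` has cube `1`, so `3 f(pu) = 0`; taking `x = pu`, `y = u` gives
`2 f(pu) = f p + f(upu)`, a sum of 2-torsion elements, so `4 f(pu) = 0`. Hence `f(pu) = 0`, and it
follows that `f p = f u` (`jensen_braid`). Two transpositions sharing exactly one point are such a
pair, so `(a b)`, `(b c)`, `(c d)` have the same image under `f`, which is 2-torsion.

For the product, write `σ τ = (σ u)(u τ)` with `u = (b c)`. The equation at `x = σ u`, `y = u τ`
reads `f(σ τ) + f(τ · uσu) = 2 f(σ u) = 0`, and `uσu = (a c)` shares exactly one point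
with `τ = (c d)`, so the second term vanishes.
-/

section Jensen

variable {G H : Type*} [Group G] [AddCommGroup H] {f : G → H}

theorem jensen_inv (h0 : f 1 = 0) (hJ : ∀ x y : G, f (x * y) + f (y⁻¹ * x) = 2 • f x) (y : G) :
    f y + f y⁻¹ = 0 := by
  simpa [h0] using hJ 1 y

theorem jensen_invol (h0 : f 1 = 0) (hJ : ∀ x y : G, f (x * y) + f (y⁻¹ * x) = 2 • f x)
    {y : G} (hy : y * y = 1) : f y + f y = 0 := by
  simpa [← eq_inv_of_mul_eq_one_left hy] using jensen_inv h0 hJ y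

theorem jensen_braid_mul (h0 : f 1 = 0) (hJ : ∀ x y : G, f (x * y) + f (y⁻¹ * x) = 2 • f x)
    {p u : G} (hp : p * p = 1) (hu : u * u = 1) (hb : p * u * p = u * p * u) :
    f (p * u) = 0 ∧ f p + f (u * p * u) = 0 := by
  have hu' : u⁻¹ = u := (eq_inv_of_mul_eq_one_left hu).symm
  have hp' : p⁻¹ = p := (eq_inv_of_mul_eq_one_left hp).symm
  have hsq : p * u * (p * u) = (p * u)⁻¹ := by
    rw [← mul_assoc, hb, mul_assoc, hu, mul_one, mul_inv_rev, hu', hp']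
  have h3 := hJ (p * u) (p * u)
  rw [hsq, inv_mul_cancel, h0] at h3
  have hi := jensen_inv h0 hJ (p * u)
  have h4 := hJ (p * u) u
  rw [mul_assoc, hu, mul_one, hu', ← mul_assoc] at h4
  have hq : u * p * u * (u * p * u) = 1 := by
    simp only [mul_assoc]
    rw [← mul_assoc u u, hu, one_mul, ← mul_assoc p p, hp, one_mul, hu]
  have h5 := jensen_invol h0 hJ hp
  have h6 := jensen_invol h0 hJ hq
  have hz : f (p * u) = 0 := by
    have e3 : (3 : ℤ) • f (p * u) = 0 := by
      linear_combination (norm := module) hi - h3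
    have e4 : (4 : ℤ) • f (p * u) = 0 := by
      linear_combination (norm := module) h5 + h6 - (2 : ℤ) • h4
    linear_combination (norm := module) e4 - e3
  exact ⟨hz, by rw [h4, hz, smul_zero]⟩

/-- For involutions `p`, `u` satisfying the braid relation, `f (p * u) = 0` and `f p = f u`. The
latter holds because `f p` and `f u` are both opposite to the value at `u * p * u = p * u * p`. -/
theorem jensen_braid (h0 : f 1 = 0) (hJ : ∀ x y : G, f (x * y) + f (y⁻¹ * x) = 2 • f x)
    {p u : G} (hp : p * p = 1) (hu : u * u = 1) (hb : p * u * p = u * p * u) :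
    f (p * u) = 0 ∧ f p = f u := by
  obtain ⟨h1, h2⟩ := jensen_braid_mul h0 hJ hp hu hb
  obtain ⟨-, h3⟩ := jensen_braid_mul h0 hJ hu hp hb.symm
  rw [hb] at h3
  exact ⟨h1, add_right_cancel (h2.trans h3.symm)⟩

end Jensen

theorem swap_conj_swap {α : Type*} [DecidableEq α] {a b c : α} (hab : a ≠ b) (hac : a ≠ c) :
    Equiv.swap b c * Equiv.swap a b * Equiv.swap b c = Equiv.swap a c := by
  rw [Equiv.swap_comm a b, Equiv.swap_comm b c, Equiv.swap_comm a c]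
  ext x
  simp only [Equiv.Perm.mul_apply, Equiv.swap_apply_def]
  grind

theorem swap_braid {α : Type*} [DecidableEq α] {a b c : α} (hab : a ≠ b) (hac : a ≠ c)
    (hbc : b ≠ c) :
    Equiv.swap a b * Equiv.swap b c * Equiv.swap a b =
      Equiv.swap b c * Equiv.swap a b * Equiv.swap b c := by
  rw [swap_conj_swap hab hac, Equiv.swap_comm a b, Equiv.swap_comm b c, Equiv.swap_comm a c]
  exact swap_conj_swap hbc.symm hac.symm

theorem jensen_eq2_disjoint_transpositions (n : ℕ) (hn : 1 ≤ n) (H : Type*) [AddCommGroup H]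
    (f : Equiv.Perm (Fin n) → H) (h0 : f 1 = 0)
    (hJ : ∀ x y : Equiv.Perm (Fin n), f (x * y) + f (y⁻¹ * x) = 2 • f x)
    (a b c d : Fin n) (hab : a ≠ b) (hac : a ≠ c) (had : a ≠ d)
    (hbc : b ≠ c) (hbd : b ≠ d) (hcd : c ≠ d) :
    f (Equiv.swap a b * Equiv.swap c d) = 0 ∧ f (Equiv.swap a b) + f (Equiv.swap c d) = 0 := by
  have key : ∀ {x y z : Fin n}, x ≠ y → x ≠ z → y ≠ z →
      f (Equiv.swap x y * Equiv.swap y z) = 0 ∧ f (Equiv.swap x y) = f (Equiv.swap y z) :=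
    fun hxy hxz hyz => jensen_braid h0 hJ (Equiv.swap_mul_self _ _) (Equiv.swap_mul_self _ _)
      (swap_braid hxy hxz hyz)
  obtain ⟨h1, h2⟩ := key hab hac hbc
  obtain ⟨-, h3⟩ := key hbc hbd hcd
  constructor
  · have h := hJ (Equiv.swap a b * Equiv.swap b c) (Equiv.swap b c * Equiv.swap c d)
    have e1 : Equiv.swap a b * Equiv.swap b c * (Equiv.swap b c * Equiv.swap c d) =
        Equiv.swap a b * Equiv.swap c d := by
      rw [mul_assoc, Equiv.swap_mul_self_mul]
    have e2 : (Equiv.swap b c * Equiv.swap c d)⁻¹ * (Equiv.swap a b * Equiv.swap b c) =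
        Equiv.swap d c * Equiv.swap c a := by
      rw [mul_inv_rev, Equiv.swap_inv, Equiv.swap_inv, Equiv.swap_comm d c, Equiv.swap_comm c a,
        ← swap_conj_swap hab hac]
      simp only [mul_assoc]
    rw [e1, e2, h1, (key hcd.symm had.symm hac.symm).1] at h
    simpa using h
  · rw [h2, h3]
    exact jensen_invol h0 hJ (Equiv.swap_mul_self _ _)
end

section
/- Let n ≥ 1, let H be an abelian (additive) group, and let f : S_n → H satisfy f(e) = 0 and f(xy) + f(y⁻¹x) = 2f(x) for all x, y ∈ S_n. Then: (i) 2f(x) = 0 for every x ∈ S_n; (ii) if x ∈ S_n is an even permutation (i.e. its sign is +1), then f(x) = 0; and (iii) if x is written as a product x = σ₁σ₂⋯σ_r of transpositions with r odd, then f(x) = f(σ_r), where σ_r is the last transposition in the decomposition. -/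
/-!
Setting `x = 1` shows that `f` is odd, and combining the equation with its version with `x`, `y`
exchanged gives `f (x * y) + f (y * x) = 2 f x + 2 f y`.

For an involution `s`, both `f (x * s)` and `f (s * x)` have the same double,
`f x + f (s * x * s)`, and they sum to `2 f x`; hence `4 f (x * s) = 4 f x`, and `4 f = 0` because
transpositions generate. A 3-cycle `c` satisfies `3 f c = 0` since `c ^ 2 = c⁻¹`, so `f c = 0`.
Then `f (x * c) + f (c * x) = 2 f x = f (x * c) + f (c⁻¹ * x)`, so `f (c * x) = f (c⁻¹ * x)`, which
for `c` of order three means `f (c * x) = f x`. As 3-cycles generate the alternating group, `f` is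
invariant under left multiplication by even permutations: it vanishes on even permutations, and on
odd ones it takes a single value, that of any transposition.
-/

namespace JensenPerm

open Equiv.Perm

section Group

variable {G H : Type*} [Group G] [AddCommGroup H] {f : G → H}

lemma map_inv (h0 : f 1 = 0) (hJ : ∀ x y : G, f (x * y) + f (y⁻¹ * x) = 2 • f x) (y : G) :
    f y⁻¹ = - f y := by
  have := hJ 1 y
  simp only [one_mul, mul_one, h0, smul_zero] at this
  exact (neg_eq_of_add_eq_zero_right this).symm

lemma map_mul_add_map_mul_swap (h0 : f 1 = 0)
    (hJ : ∀ x y : G, f (x * y) + f (y⁻¹ * x) = 2 • f x) (x y : G) :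
    f (x * y) + f (y * x) = 2 • f x + 2 • f y := by
  have h1 := hJ x y
  have h2 := hJ y x
  have h3 : f (x⁻¹ * y) = - f (y⁻¹ * x) := by
    rw [← map_inv h0 hJ, mul_inv_rev, inv_inv]
  rw [h3] at h2
  rw [← h1, ← h2]
  abel

lemma four_smul_map_involution_mul
    (hJ : ∀ x y : G, f (x * y) + f (y⁻¹ * x) = 2 • f x) {s : G} (hs : s * s = 1) (x : G) :
    4 • f (s * x) = 4 • f x := by
  have hi : s⁻¹ = s := inv_eq_of_mul_eq_one_left hs
  have h1 := hJ x s
  have h2 := hJ (x * s) s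
  have h3 := hJ (s * x) s
  rw [hi] at h1 h2 h3
  rw [mul_assoc, hs, mul_one] at h2
  rw [← mul_assoc s s, hs, one_mul, mul_assoc] at h3
  have h4 : 2 • f (x * s) = 2 • f (s * x) := by rw [← h2, ← h3]; abel
  calc 4 • f (s * x) = 2 • f (s * x) + 2 • f (s * x) := by abel
    _ = 2 • (f (x * s) + f (s * x)) := by rw [smul_add, h4]
    _ = 4 • f x := by rw [h1]; abel

/-- Left invariance under an element `c` with `c ^ 3 = 1` on which `4 f` vanishes. -/
lemma map_mul_of_cube_eq_one (h0 : f 1 = 0)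
    (hJ : ∀ x y : G, f (x * y) + f (y⁻¹ * x) = 2 • f x) {c : G} (hc : c * c = c⁻¹)
    (h4 : 4 • f c = 0) (x : G) : f (c * x) = f x := by
  have hfc : f c = 0 := by
    have := hJ c c
    rw [hc, inv_mul_cancel, h0, add_zero, map_inv h0 hJ] at this
    have h3 : 3 • f c = 0 := by
      calc 3 • f c = 2 • f c + f c := by abel
        _ = 0 := by rw [← this]; abel
    calc f c = 4 • f c - 3 • f c := by abel
      _ = 0 := by rw [h4, h3, sub_zero]
  have key (z : G) : f (c * z) = f (c⁻¹ * z) := by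
    have h1 := map_mul_add_map_mul_swap h0 hJ z c
    rw [hfc, smul_zero, add_zero, ← hJ z c] at h1
    exact add_left_cancel h1
  have := key (c * x)
  rw [inv_mul_cancel_left, ← mul_assoc, hc, ← key] at this
  exact this

end Group

section Perm

variable {α H : Type*} [Fintype α] [DecidableEq α] [AddCommGroup H] {f : Equiv.Perm α → H}

lemma four_smul_map (h0 : f 1 = 0)
    (hJ : ∀ x y : Equiv.Perm α, f (x * y) + f (y⁻¹ * x) = 2 • f x) (x : Equiv.Perm α) :
    4 • f x = 0 := by
  induction x using Equiv.Perm.swap_induction_on with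
  | one => rw [h0, smul_zero]
  | swap_mul x a b _ ih =>
    rw [four_smul_map_involution_mul hJ (Equiv.swap_mul_self a b), ih]

lemma map_even_mul (h0 : f 1 = 0)
    (hJ : ∀ x y : Equiv.Perm α, f (x * y) + f (y⁻¹ * x) = 2 • f x) {g : Equiv.Perm α}
    (hg : sign g = 1) : ∀ x, f (g * x) = f x := by
  have hg' : g ∈ Subgroup.closure {σ : Equiv.Perm α | IsThreeCycle σ} := by
    rw [closure_three_cycles_eq_alternating]
    exact mem_alternatingGroup.2 hg
  induction hg' using Subgroup.closure_induction with
  | mem c hc =>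
    have h3 : c ^ 3 = 1 := by rw [← hc.orderOf, pow_orderOf_eq_one]
    refine map_mul_of_cube_eq_one h0 hJ (eq_inv_of_mul_eq_one_left ?_) (four_smul_map h0 hJ c)
    rw [← h3, pow_succ, pow_two]
  | one => simp
  | mul a b ha hb iha ihb =>
    rw [closure_three_cycles_eq_alternating, mem_alternatingGroup] at ha hb
    intro x
    rw [mul_assoc, iha ha, ihb hb]
  | inv a ha iha =>
    rw [closure_three_cycles_eq_alternating, mem_alternatingGroup] at ha
    intro x
    rw [← iha ha (a⁻¹ * x), mul_inv_cancel_left]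

lemma map_eq_of_sign_eq (h0 : f 1 = 0)
    (hJ : ∀ x y : Equiv.Perm α, f (x * y) + f (y⁻¹ * x) = 2 • f x) {x y : Equiv.Perm α}
    (h : sign x = sign y) : f x = f y := by
  have hg : sign (x * y⁻¹) = 1 := by rw [Equiv.Perm.sign_mul, sign_inv, h, Int.units_mul_self]
  have := map_even_mul h0 hJ hg y
  rwa [inv_mul_cancel_right] at this

end Perm

end JensenPerm

theorem jensen_eq2_values (n : ℕ) (hn : 1 ≤ n) (H : Type*) [AddCommGroup H]
    (f : Equiv.Perm (Fin n) → H) (h0 : f 1 = 0)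
    (hJ : ∀ x y : Equiv.Perm (Fin n), f (x * y) + f (y⁻¹ * x) = 2 • f x) :
    (∀ x : Equiv.Perm (Fin n), 2 • f x = 0) ∧
    (∀ x : Equiv.Perm (Fin n), Equiv.Perm.sign x = 1 → f x = 0) ∧
    (∀ (x : Equiv.Perm (Fin n)) (l : List (Equiv.Perm (Fin n))),
      (∀ σ ∈ l, σ.IsSwap) → x = l.prod → Odd l.length → ∀ hne : l ≠ [],
        f x = f (l.getLast hne)) := by
  refine ⟨fun x => ?_, fun x hx => ?_, fun x l hl hx hodd hne => ?_⟩
  · -- `x` and `x⁻¹` have the same sign, so `f x = f x⁻¹ = - f x`.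
    have h1 : f x⁻¹ = f x :=
      JensenPerm.map_eq_of_sign_eq h0 hJ (Equiv.Perm.sign_inv x)
    rw [JensenPerm.map_inv h0 hJ] at h1
    rw [two_nsmul]
    nth_rewrite 1 [← h1]
    exact neg_add_cancel _
  · rw [← h0]
    exact JensenPerm.map_eq_of_sign_eq h0 hJ (by rw [hx, Equiv.Perm.sign_one])
  · apply JensenPerm.map_eq_of_sign_eq h0 hJ
    rw [hx, Equiv.Perm.sign_prod_list_swap hl, hodd.neg_one_pow,
      (hl _ (List.getLast_mem hne)).sign_eq]
end
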